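/- Let D be a category with finite products and terminal object p, and let G and G' be group objects of D. Let G act on itself on the right by translation, and for an arrow f: G → G' of D let Δf: G×G → G' be the difference arrow Δf(u,g) = (f(u))^{-1}·f(u·g). Then the following are equivalent: (i) Δf is a G-family of morphisms of group objects; (ii) f is left affine, i.e. f = c·h in the group Hom(G,G') for some point c: p → G' (composed with the unique arrow G → p) and some morphism of group objects h: G → G'. Moreover, in that case Δf(u,g) = h(g), i.e. Δf = h∘pr_G. -/

import Mathlib

open CategoryTheory CategoryTheory.Limits

noncomputable section

universe v u

namespace DiffCalc

variable {D : Type u} [Category.{v} D] [HasTerminal D] [HasBinaryProducts D]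

/-- The multiplication of two generalized elements `a, b : Z ⟶ X` induced by an arrow
`m : X ⨯ X ⟶ X`. -/
def gmul {X Z : D} (m : X ⨯ X ⟶ X) (a b : Z ⟶ X) : Z ⟶ X :=
  prod.lift a b ≫ m

/-- A group object structure on an object `X` of a category with finite products, with the
group axioms expressed for (generic) generalized elements. -/
structure GroupStr (X : D) where
  mul : X ⨯ X ⟶ X
  inv : X ⟶ X
  one : ⊤_ D ⟶ X
  mul_assoc' : ∀ {Z : D} (a b c : Z ⟶ X),
    gmul mul (gmul mul a b) c = gmul mul a (gmul mul b c)
  one_mul' : ∀ {Z : D} (a : Z ⟶ X), gmul mul (terminal.from Z ≫ one) a = a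
  mul_one' : ∀ {Z : D} (a : Z ⟶ X), gmul mul a (terminal.from Z ≫ one) = a
  mul_inv' : ∀ {Z : D} (a : Z ⟶ X), gmul mul a (a ≫ inv) = terminal.from Z ≫ one
  inv_mul' : ∀ {Z : D} (a : Z ⟶ X), gmul mul (a ≫ inv) a = terminal.from Z ≫ one

/-- The unit generalized element `1 : Z ⟶ X` of a group object. -/
def gone {X : D} (s : GroupStr X) (Z : D) : Z ⟶ X :=
  terminal.from Z ≫ s.one

/-- The group of generalized elements `Z ⟶ X` of a group object `X`. -/
def homGroup {X : D} (s : GroupStr X) (Z : D) : Group (Z ⟶ X) where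
  mul a b := gmul s.mul a b
  one := gone s Z
  inv a := a ≫ s.inv
  mul_assoc := s.mul_assoc'
  one_mul := s.one_mul'
  mul_one := s.mul_one'
  inv_mul_cancel := s.inv_mul'

/-- A morphism of group objects, in generalized-element form. -/
structure IsGroupHom {X Y : D} (sX : GroupStr X) (sY : GroupStr Y) (f : X ⟶ Y) : Prop where
  map_mul : ∀ {Z : D} (a b : Z ⟶ X), gmul sX.mul a b ≫ f = gmul sY.mul (a ≫ f) (b ≫ f)
  map_inv : ∀ {Z : D} (a : Z ⟶ X), (a ≫ sX.inv) ≫ f = (a ≫ f) ≫ sY.inv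
  map_one : ∀ (Z : D), gone sX Z ≫ f = gone sY Z

/-- A `U`-family of morphisms of group objects `l : U ⨯ G ⟶ G'`, in
generalized-element form. -/
structure IsGroupHomFamily {U G G' : D} (sG : GroupStr G) (sG' : GroupStr G')
    (l : U ⨯ G ⟶ G') : Prop where
  map_mul : ∀ {Z : D} (u : Z ⟶ U) (g₁ g₂ : Z ⟶ G),
    prod.lift u (gmul sG.mul g₁ g₂) ≫ l =
      gmul sG'.mul (prod.lift u g₁ ≫ l) (prod.lift u g₂ ≫ l)
  map_inv : ∀ {Z : D} (u : Z ⟶ U) (g : Z ⟶ G),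
    prod.lift u (g ≫ sG.inv) ≫ l = (prod.lift u g ≫ l) ≫ sG'.inv
  map_one : ∀ {Z : D} (u : Z ⟶ U), prod.lift u (gone sG Z) ≫ l = gone sG' Z

/-- A right action of a group object `G` on an object `M`, in generalized-element form. -/
structure IsRightAction {G M : D} (s : GroupStr G) (a : M ⨯ G ⟶ M) : Prop where
  act_act : ∀ {Z : D} (m : Z ⟶ M) (g₁ g₂ : Z ⟶ G),
    prod.lift (prod.lift m g₁ ≫ a) g₂ ≫ a = prod.lift m (gmul s.mul g₁ g₂) ≫ a
  act_one : ∀ {Z : D} (m : Z ⟶ M), prod.lift m (gone s Z) ≫ a = m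

/-- The difference arrow `Δf : M ⨯ G ⟶ G'` of `f : M ⟶ G'` with respect to a right action
`a : M ⨯ G ⟶ M`:  `Δf(u,g) = (f u)⁻¹ ⬝ f (u ⬝ g)`. -/
def diffArrow {M G G' : D} (sG' : GroupStr G') (a : M ⨯ G ⟶ M) (f : M ⟶ G') :
    M ⨯ G ⟶ G' :=
  gmul sG'.mul ((prod.fst ≫ f) ≫ sG'.inv) (a ≫ f)


theorem comp_gmul {X Z W : D} (m : X ⨯ X ⟶ X) (k : W ⟶ Z) (a b : Z ⟶ X) :
    k ≫ gmul m a b = gmul m (k ≫ a) (k ≫ b) := by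
  unfold gmul
  rw [← Category.assoc, prod.comp_lift]

theorem comp_gone {X Z W : D} (s : GroupStr X) (k : W ⟶ Z) :
    k ≫ gone s Z = gone s W := by
  unfold gone
  rw [← Category.assoc, terminal.comp_from]

theorem lift_diffArrow {G G' Z : D} (sG : GroupStr G) (sG' : GroupStr G') (f : G ⟶ G')
    (u g : Z ⟶ G) :
    prod.lift u g ≫ diffArrow sG' sG.mul f =
      gmul sG'.mul ((u ≫ f) ≫ sG'.inv) (gmul sG.mul u g ≫ f) := by
  unfold diffArrow
  rw [comp_gmul]
  simp only [← Category.assoc, prod.lift_fst]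
  rfl

theorem gmul_fst_snd {G : D} (m : G ⨯ G ⟶ G) : gmul m prod.fst prod.snd = m := by
  unfold gmul
  rw [prod.lift_fst_snd, Category.id_comp]

theorem cancel_left {X Z : D} (s : GroupStr X) (a b : Z ⟶ X) :
    gmul s.mul (a ≫ s.inv) (gmul s.mul a b) = b := by
  letI := homGroup s Z
  exact inv_mul_cancel_left a b

theorem cancel_left_inv {X Z : D} (s : GroupStr X) (a b : Z ⟶ X) :
    gmul s.mul a (gmul s.mul (a ≫ s.inv) b) = b := by
  letI := homGroup s Z
  exact mul_inv_cancel_left a b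

theorem diffArrow_affine {G G' : D} (sG : GroupStr G) (sG' : GroupStr G') (f : G ⟶ G')
    (c : ⊤_ D ⟶ G') (h : G ⟶ G') (hh : IsGroupHom sG sG' h)
    (hf : f = gmul sG'.mul (terminal.from G ≫ c) h) :
    diffArrow sG' sG.mul f = prod.snd ≫ h := by
  have key : ∀ {Z : D} (k : Z ⟶ G), k ≫ f = gmul sG'.mul (terminal.from Z ≫ c) (k ≫ h) := by
    intro Z k
    rw [hf, comp_gmul, ← Category.assoc, terminal.comp_from]
  have h2 : sG.mul ≫ f = gmul sG'.mul (prod.fst ≫ f) (prod.snd ≫ h) := by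
    rw [key, key, sG'.mul_assoc', ← hh.map_mul, gmul_fst_snd]
  unfold diffArrow
  rw [h2, cancel_left]

/-- for `f : G ⟶ G'` and the difference arrow `Δf` taken with respect to the
right translation action of `G` on itself, `Δf` is a `G`-family of morphisms of group
objects iff `f` is left affine (`f = c ⬝ h` with `c` a point and `h` a morphism of group
objects); and in that case `Δf = h ∘ pr_G`. -/
theorem diffArrow_family_iff_affine
    {D : Type u} [Category.{v} D] [HasTerminal D] [HasBinaryProducts D]
    {G G' : D} (sG : GroupStr G) (sG' : GroupStr G') (f : G ⟶ G') :
    (IsGroupHomFamily sG sG' (diffArrow sG' sG.mul f) ↔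
      ∃ (c : ⊤_ D ⟶ G') (h : G ⟶ G'), IsGroupHom sG sG' h ∧
        f = gmul sG'.mul (terminal.from G ≫ c) h) ∧
    (∀ (c : ⊤_ D ⟶ G') (h : G ⟶ G'), IsGroupHom sG sG' h →
      f = gmul sG'.mul (terminal.from G ≫ c) h →
      diffArrow sG' sG.mul f = prod.snd ≫ h) := by
  refine ⟨⟨fun hΔ => ?_, ?_⟩, diffArrow_affine sG sG' f⟩
  · refine ⟨sG.one ≫ f, prod.lift (gone sG G) (𝟙 G) ≫ diffArrow sG' sG.mul f, ?_, ?_⟩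
    · have key : ∀ {Z : D} (k : Z ⟶ G),
          k ≫ prod.lift (gone sG G) (𝟙 G) ≫ diffArrow sG' sG.mul f =
            prod.lift (gone sG Z) k ≫ diffArrow sG' sG.mul f := by
        intro Z k
        rw [← Category.assoc, prod.comp_lift, comp_gone, Category.comp_id]
      refine ⟨fun a b => ?_, fun a => ?_, fun Z => ?_⟩
      · rw [key, key, key, hΔ.map_mul]
      · rw [key, key, hΔ.map_inv]
      · rw [key, hΔ.map_one]
    · rw [lift_diffArrow, ← Category.assoc]
      change f = gmul sG'.mul (gone sG G ≫ f) _
      rw [cancel_left_inv]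
      unfold gone
      rw [sG.one_mul', Category.id_comp]
  · rintro ⟨c, h, hh, hf⟩
    rw [diffArrow_affine sG sG' f c h hh hf]
    have key : ∀ {Z : D} (u g : Z ⟶ G), prod.lift u g ≫ prod.snd ≫ h = g ≫ h := by
      intro Z u g
      rw [← Category.assoc, prod.lift_snd]
    refine ⟨fun u a b => ?_, fun u a => ?_, fun u => ?_⟩
    · rw [key, key, key, hh.map_mul]
    · rw [key, key, hh.map_inv]
    · rw [key, hh.map_one]

end DiffCalc
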